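/- For all odd natural numbers k and j, the following explicit formula holds: D_k(b_{3,j}) = 4(2 b_{1,1} b_{2,j+k-1} + b_{2,1} b_{1,j+k-1} + b_{2,j+k+1}) + 4 Σ_{s=1}^{(k-1)/2} (2 b_{1,1} b_{2,2s-1} + b_{2,1} b_{1,2s-1} + b_{2,2s+1}) b_{1,j+k-2s-1} + Σ_{s=1}^{(k-1)/2} (b_{3,2s-1} b_{2,j+k-2s-1} − b_{2,2s-1} b_{3,j+k-2s-1}) − 4 Σ_{s=1}^{(k-1)/2} b_{1,2s-1} (2 b_{1,1} b_{2,j+k-2s-1} + b_{2,1} b_{1,j+k-2s-1} + b_{2,j+k-2s+1}). -/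

import Mathlib

open MvPolynomial Finset

noncomputable section

/-- The polynomial ring `R = ℂ[b_{i,2j-1} : i ∈ {1,2,3}, j ≥ 1]`. -/
abbrev R : Type := MvPolynomial (Fin 3 × ℕ+) ℂ

/-- `b i j` denotes the variable `b_{i+1, j}`, intended for odd `j ≥ 1`;
the variable `b_{i+1, 2m-1}` is `X (i, m)`. -/
def b (i : Fin 3) (j : ℕ) : R := MvPolynomial.X (i, ⟨j / 2 + 1, Nat.succ_pos _⟩)

/-- The derivation `D_1`, determined by its values on the variables. -/
def D1 : Derivation ℂ R R :=
  MvPolynomial.mkDerivation ℂ fun p =>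
    let j : ℕ := 2 * (p.2 : ℕ) - 1
    if p.1 = 0 then b 1 j
    else if p.1 = 1 then b 2 j
    else 4 * (2 * b 0 1 * b 1 j + b 1 1 * b 0 j + b 1 (j + 2))

/-- The value of `D_k` on the variable `b_{1,j}` (for odd `k`, `j`). -/
def DB1 (k j : ℕ) : R :=
  b 1 (j + k - 1) + ∑ s ∈ Finset.Icc 1 ((k - 1) / 2),
    (b 1 (2 * s - 1) * b 0 (j + k - 2 * s - 1) - b 0 (2 * s - 1) * b 1 (j + k - 2 * s - 1))

/-- The derivation `D_k` (intended for odd `k`), determined by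
`D_k(b_{1,j}) = DB1 k j`, `D_k(b_{2,j}) = D_1(D_k(b_{1,j}))`, `D_k(b_{3,j}) = D_1(D_k(b_{2,j}))`. -/
def D (k : ℕ) : Derivation ℂ R R :=
  MvPolynomial.mkDerivation ℂ fun p =>
    let j : ℕ := 2 * (p.2 : ℕ) - 1
    if p.1 = 0 then DB1 k j
    else if p.1 = 1 then D1 (DB1 k j)
    else D1 (D1 (DB1 k j))

end

/-!
Since `D_1 b_{1,m} = b_{2,m}`, the `s`-th summand of `D_k(b_{1,j})` is the Wronskian
`D_1(x) y - x D_1(y)` of `x = b_{1,2s-1}` and `y = b_{1,j+k-2s-1}`. In its second `D_1`-derivative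
the mixed terms combine to `D_1²(x) D_1(y) - D_1(x) D_1²(y)`, and the third derivatives of `x` and
`y` are eliminated by
`D_1³ b_{1,m} = 4 (2 b_{1,1} b_{2,m} + b_{2,1} b_{1,m} + b_{2,m+2})`.
-/

theorem derivation_derivation_wronskian {S A : Type*} [CommSemiring S] [CommRing A] [Algebra S A]
    (δ : Derivation S A A) (x y : A) :
    δ (δ (δ x * y - x * δ y)) =
      δ (δ (δ x)) * y + (δ (δ x) * δ y - δ x * δ (δ y)) - x * δ (δ (δ y)) := by
  simp only [map_sub, map_add, Derivation.leibniz, smul_eq_mul]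
  ring

theorem exists_eq_two_mul_pnat_sub_one {j : ℕ} (hj : Odd j) :
    ∃ n : ℕ+, j = 2 * (n : ℕ) - 1 := by
  obtain ⟨m, rfl⟩ := hj
  exact ⟨m.succPNat, by rw [Nat.succPNat_coe]; lia⟩

theorem b_two_mul_pnat_sub_one (i : Fin 3) (n : ℕ+) : b i (2 * (n : ℕ) - 1) = X (i, n) := by
  have hn : (2 * (n : ℕ) - 1) / 2 + 1 = n := by have := n.pos; lia
  exact congrArg (fun m => X (i, m)) (PNat.eq hn)

theorem D1_b_zero {j : ℕ} (hj : Odd j) : D1 (b 0 j) = b 1 j := by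
  obtain ⟨n, rfl⟩ := exists_eq_two_mul_pnat_sub_one hj
  rw [b_two_mul_pnat_sub_one 0, D1, mkDerivation_X]
  rfl

theorem D1_b_one {j : ℕ} (hj : Odd j) : D1 (b 1 j) = b 2 j := by
  obtain ⟨n, rfl⟩ := exists_eq_two_mul_pnat_sub_one hj
  rw [b_two_mul_pnat_sub_one 1, D1, mkDerivation_X]
  rfl

theorem D1_b_two {j : ℕ} (hj : Odd j) :
    D1 (b 2 j) = 4 * (2 * b 0 1 * b 1 j + b 1 1 * b 0 j + b 1 (j + 2)) := by
  obtain ⟨n, rfl⟩ := exists_eq_two_mul_pnat_sub_one hj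
  rw [b_two_mul_pnat_sub_one 2, D1, mkDerivation_X]
  rfl

theorem D_b_two (k : ℕ) {j : ℕ} (hj : Odd j) : D k (b 2 j) = D1 (D1 (DB1 k j)) := by
  obtain ⟨n, rfl⟩ := exists_eq_two_mul_pnat_sub_one hj
  rw [b_two_mul_pnat_sub_one 2, D, mkDerivation_X]
  rfl

theorem D1_D1_b_wronskian {p q : ℕ} (hp : Odd p) (hq : Odd q) :
    D1 (D1 (b 1 p * b 0 q - b 0 p * b 1 q)) =
      4 * ((2 * b 0 1 * b 1 p + b 1 1 * b 0 p + b 1 (p + 2)) * b 0 q)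
        + (b 2 p * b 1 q - b 1 p * b 2 q)
        - 4 * (b 0 p * (2 * b 0 1 * b 1 q + b 1 1 * b 0 q + b 1 (q + 2))) := by
  have h := derivation_derivation_wronskian D1 (b 0 p) (b 0 q)
  simp only [D1_b_zero hp, D1_b_zero hq, D1_b_one hp, D1_b_one hq, D1_b_two hp, D1_b_two hq] at h
  rw [h]
  ring

theorem D1_D1_b_wronskian_sub {n s : ℕ} (hn : Even n) (hs : 1 ≤ s) (hsn : 2 * s < n) :
    D1 (D1 (b 1 (2 * s - 1) * b 0 (n - 2 * s - 1) - b 0 (2 * s - 1) * b 1 (n - 2 * s - 1))) =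
      4 * ((2 * b 0 1 * b 1 (2 * s - 1) + b 1 1 * b 0 (2 * s - 1) + b 1 (2 * s + 1))
          * b 0 (n - 2 * s - 1))
        + (b 2 (2 * s - 1) * b 1 (n - 2 * s - 1) - b 1 (2 * s - 1) * b 2 (n - 2 * s - 1))
        - 4 * (b 0 (2 * s - 1) * (2 * b 0 1 * b 1 (n - 2 * s - 1)
          + b 1 1 * b 0 (n - 2 * s - 1) + b 1 (n - 2 * s + 1))) := by
  have hp : Odd (2 * s - 1) := by grind
  have hq : Odd (n - 2 * s - 1) := by grind
  rw [D1_D1_b_wronskian hp hq, show 2 * s - 1 + 2 = 2 * s + 1 by lia,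
    show n - 2 * s - 1 + 2 = n - 2 * s + 1 by lia]

/-- explicit formula for `D_k(b_{3,j})` for odd `k`, `j`. -/
theorem Dk_b3j (k j : ℕ) (hk : Odd k) (hj : Odd j) :
    D k (b 2 j) =
      4 * (2 * b 0 1 * b 1 (j + k - 1) + b 1 1 * b 0 (j + k - 1) + b 1 (j + k + 1))
      + 4 * ∑ s ∈ Finset.Icc 1 ((k - 1) / 2),
          (2 * b 0 1 * b 1 (2 * s - 1) + b 1 1 * b 0 (2 * s - 1) + b 1 (2 * s + 1))
            * b 0 (j + k - 2 * s - 1)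
      + ∑ s ∈ Finset.Icc 1 ((k - 1) / 2),
          (b 2 (2 * s - 1) * b 1 (j + k - 2 * s - 1)
            - b 1 (2 * s - 1) * b 2 (j + k - 2 * s - 1))
      - 4 * ∑ s ∈ Finset.Icc 1 ((k - 1) / 2),
          b 0 (2 * s - 1) * (2 * b 0 1 * b 1 (j + k - 2 * s - 1)
            + b 1 1 * b 0 (j + k - 2 * s - 1) + b 1 (j + k - 2 * s + 1)) := by
  have hjk : Even (j + k) := hj.add_odd hk
  have hpos : 0 < j := hj.pos
  have leading : D1 (D1 (b 1 (j + k - 1))) =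
      4 * (2 * b 0 1 * b 1 (j + k - 1) + b 1 1 * b 0 (j + k - 1) + b 1 (j + k + 1)) := by
    have hodd : Odd (j + k - 1) := by grind
    rw [D1_b_one hodd, D1_b_two hodd, show j + k - 1 + 2 = j + k + 1 by lia]
  have summand {s : ℕ} (hs : s ∈ Icc 1 ((k - 1) / 2)) :=
    D1_D1_b_wronskian_sub hjk (mem_Icc.mp hs).1 (by have := (mem_Icc.mp hs).2; lia)
  rw [D_b_two k hj, DB1]
  simp only [map_add, map_sum]
  rw [leading, sum_congr rfl fun s hs => summand hs, sum_sub_distrib, sum_add_distrib,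
    ← mul_sum, ← mul_sum]
  ring
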